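/- Let T be a finite tree with at least three vertices. If T is a general corona of a tree, then the domination subdivision number of T equals 3, i.e., sd(T) = 3. -/

import Mathlib

open SimpleGraph

namespace GenCorona

universe u

/-- A vertex neighborhood partition of a graph `G`: for every vertex `v`, a partition
of the open neighborhood `N_G(v)` into nonempty sets. -/
structure NbhdPartition {V : Type u} (G : SimpleGraph V) where
  part : V → Set (Set V)
  nonempty : ∀ v : V, ∀ A ∈ part v, A.Nonempty
  subset_nbhd : ∀ v : V, ∀ A ∈ part v, A ⊆ G.neighborSet v
  covers : ∀ v : V, ∀ u ∈ G.neighborSet v, ∃ A ∈ part v, u ∈ A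
  eq_of_inter : ∀ v : V, ∀ A ∈ part v, ∀ B ∈ part v, (A ∩ B).Nonempty → A = B

variable {V : Type u}

/-- The vertex type of the general corona `G ∘ 𝒫`: external vertices `(v,1)` are encoded
as `Sum.inl v`, internal vertices `(v,A)` (with `A ∈ 𝒫(v)`) as `Sum.inr ⟨(v,A), _⟩`. -/
abbrev CoronaVert (G : SimpleGraph V) (P : NbhdPartition G) : Type u :=
  V ⊕ {p : V × Set V // p.2 ∈ P.part p.1}

/-- The general corona `G ∘ 𝒫`. -/
def corona (G : SimpleGraph V) (P : NbhdPartition G) : SimpleGraph (CoronaVert G P) :=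
  SimpleGraph.fromRel fun x y =>
    match x, y with
    | Sum.inl v, Sum.inr p => v = p.val.1
    | Sum.inr p, Sum.inr q =>
        G.Adj p.val.1 q.val.1 ∧ q.val.1 ∈ p.val.2 ∧ p.val.1 ∈ q.val.2
    | _, _ => False

/-- The set of external vertices of the general corona. -/
def Ext (G : SimpleGraph V) (P : NbhdPartition G) : Set (CoronaVert G P) :=
  Set.range Sum.inl

/-- A graph is a general corona of a tree if it is isomorphic to `T ∘ 𝒫` for some finite
tree `T` and some vertex neighborhood partition `𝒫` of `T`. -/
def IsGeneralCoronaOfTree {W : Type*} (H : SimpleGraph W) : Prop :=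
  ∃ (n : ℕ) (T : SimpleGraph (Fin n)) (P : NbhdPartition T),
    T.IsTree ∧ Nonempty (H ≃g corona T P)

/-- A graph `H` is a general corona of a tree with external vertex set `E`. -/
def IsGenCoronaWithExt {W : Type*} (H : SimpleGraph W) (E : Set W) : Prop :=
  ∃ (n : ℕ) (T : SimpleGraph (Fin n)) (P : NbhdPartition T),
    T.IsTree ∧ ∃ f : H ≃g corona T P, E = ⇑f ⁻¹' Ext T P

/-- `D` is a dominating set of `G`. -/
def IsDominating (G : SimpleGraph V) (D : Set V) : Prop :=
  ∀ v ∉ D, ∃ u ∈ D, G.Adj v u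

/-- `S` is a 2-packing of `G`: any two distinct vertices of `S` are at distance
greater than 2 (where the extended distance of unreachable vertices is `⊤`). -/
def Is2Packing (G : SimpleGraph V) (S : Set V) : Prop :=
  ∀ u ∈ S, ∀ v ∈ S, u ≠ v → 2 < G.edist u v

/-- A leaf is a vertex of degree 1, i.e. with exactly one neighbor. -/
def IsLeaf (G : SimpleGraph V) (v : V) : Prop :=
  (G.neighborSet v).ncard = 1

/-- The domination number: the minimum size of a dominating set. -/
noncomputable def dominationNumber (G : SimpleGraph V) : ℕ :=
  sInf {n : ℕ | ∃ D : Set V, IsDominating G D ∧ D.ncard = n}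

/-- The graph obtained from `G` by subdividing every edge in `F` (each once):
for each `e ∈ F` a new vertex `Sum.inr e` replaces the edge `e` by a path of length two. -/
def subdivide (G : SimpleGraph V) (F : Set (Sym2 V)) : SimpleGraph (V ⊕ F) :=
  SimpleGraph.fromRel fun x y =>
    match x, y with
    | Sum.inl u, Sum.inl v => G.Adj u v ∧ s(u, v) ∉ F
    | Sum.inl u, Sum.inr e => u ∈ e.val
    | _, _ => False

/-- The domination subdivision number `sd(G)`: the minimum number of edges which must be
subdivided (each edge at most once) in order to increase the domination number. -/
noncomputable def sd (G : SimpleGraph V) : ℕ :=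
  sInf {k : ℕ | ∃ F : Set (Sym2 V), F ⊆ G.edgeSet ∧ F.ncard = k ∧
    dominationNumber G < dominationNumber (subdivide G F)}

/-- The corona `G ∘ K₁`: attach one new pendant vertex `Sum.inr v` to each vertex
`Sum.inl v` of `G`. -/
def coronaK1 (G : SimpleGraph V) : SimpleGraph (V ⊕ V) :=
  SimpleGraph.fromRel fun x y =>
    match x, y with
    | Sum.inl u, Sum.inl w => G.Adj u w
    | Sum.inl u, Sum.inr w => u = w
    | _, _ => False

/-- The 2-subdivision `S₂(G)`: every edge `uv` is replaced by a path `(u, x₁, x₂, v)`;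
the new vertex `Sum.inr ⟨(u,v), _⟩` is the subdivision vertex adjacent to `u`. -/
def twoSubdivision (G : SimpleGraph V) : SimpleGraph (V ⊕ {p : V × V // G.Adj p.1 p.2}) :=
  SimpleGraph.fromRel fun x y =>
    match x, y with
    | Sum.inl u, Sum.inr p => u = p.val.1
    | Sum.inr p, Sum.inr q => p.val.1 = q.val.2 ∧ p.val.2 = q.val.1
    | _, _ => False

/-- `𝒫'` is a refinement of `𝒫`. -/
def Refines {G : SimpleGraph V} (P' P : NbhdPartition G) : Prop :=
  ∀ v : V, ∀ A ∈ P'.part v, ∃ B ∈ P.part v, A ⊆ B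

/-- The graph obtained by contracting the two vertices `x` and `y` of `G` to the single
vertex `x` (the vertex `y` is removed, and `x` becomes adjacent to all former
neighbors of `y`). -/
def contractPair {W : Type*} (G : SimpleGraph W) (x y : W) :
    SimpleGraph {w : W // w ≠ y} :=
  SimpleGraph.fromRel fun a b =>
    G.Adj a.val b.val ∨ (a.val = x ∧ G.Adj y b.val) ∨ (b.val = x ∧ G.Adj a.val y)

/-- The graph obtained from `G` by attaching a path `(x, y, z)` (encoded as
`Sum.inr 0, Sum.inr 1, Sum.inr 2`) to the vertex `v` via the edge `v x`. -/
def attachPath3 {W : Type*} (G : SimpleGraph W) (v : W) : SimpleGraph (W ⊕ Fin 3) :=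
  SimpleGraph.fromRel fun a b =>
    match a, b with
    | Sum.inl u, Sum.inl w => G.Adj u w
    | Sum.inl u, Sum.inr i => u = v ∧ i = 0
    | Sum.inr i, Sum.inr j => (i = 0 ∧ j = 1) ∨ (i = 1 ∧ j = 2)
    | _, _ => False

/-- The graph obtained from `G` by attaching a path `(x, y)` (encoded as
`Sum.inr 0, Sum.inr 1`) to the vertex `v` via the edge `v x`. -/
def attachPath2 {W : Type*} (G : SimpleGraph W) (v : W) : SimpleGraph (W ⊕ Fin 2) :=
  SimpleGraph.fromRel fun a b =>
    match a, b with
    | Sum.inl u, Sum.inl w => G.Adj u w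
    | Sum.inl u, Sum.inr i => u = v ∧ i = 0
    | Sum.inr i, Sum.inr j => i = 0 ∧ j = 1
    | _, _ => False

/-- The family `𝓕` of labeled trees; the label of a vertex is `A` when it belongs to the
distinguished set `L`, and `B` otherwise.  The family contains the labeled path `P₄`
(leaves labeled `A`, support vertices labeled `B`) and is closed under the two
attachment operations. -/
inductive LabF : ∀ {W : Type}, SimpleGraph W → Set W → Prop where
  | base : LabF (SimpleGraph.pathGraph 4) ({0, 3} : Set (Fin 4))
  | opA {W : Type} {G : SimpleGraph W} {L : Set W} (v : W) :
      LabF G L → v ∈ L →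
        LabF (attachPath3 G v) (Sum.inl '' L ∪ {Sum.inr (2 : Fin 3)})
  | opB {W : Type} {G : SimpleGraph W} {L : Set W} (v : W) :
      LabF G L → v ∉ L →
        LabF (attachPath2 G v) (Sum.inl '' L ∪ {Sum.inr (1 : Fin 2)})

/-- A tree `T` belongs to the family `𝓕` if it admits a labeling constructed by the
above rules, i.e. it is isomorphic to a member of the inductively generated family. -/
def MemF {W : Type*} (T : SimpleGraph W) : Prop :=
  ∃ (W' : Type) (G : SimpleGraph W') (L : Set W'), LabF G L ∧ Nonempty (T ≃g G)

variable {G : SimpleGraph V} {E : Set V} {F : Set (Sym2 V)}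

/-- `E` is an efficient dominating set of `G`, and every vertex outside `E` also has a neighbor
outside `E`. -/
structure IsExternal (G : SimpleGraph V) (E : Set V) : Prop where
  indep : ∀ u ∈ E, ∀ v ∈ E, ¬ G.Adj u v
  exists_ext : ∀ v ∉ E, ∃ a ∈ E, G.Adj v a
  ext_unique : ∀ v ∉ E, ∀ a ∈ E, ∀ b ∈ E, G.Adj v a → G.Adj v b → a = b
  exists_int : ∀ v ∉ E, ∃ w ∉ E, G.Adj v w

theorem IsGeneralCoronaOfTree.exists_isExternal (h : IsGeneralCoronaOfTree G) :
    ∃ E : Set V, IsExternal G E := by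
  obtain ⟨n, S, P, -, ⟨f⟩⟩ := h
  refine ⟨f ⁻¹' Ext S P, ?_, ?_, ?_, ?_⟩
  · rintro u ⟨a, ha⟩ v ⟨b, hb⟩ huv
    rw [← f.map_adj_iff, ← ha, ← hb] at huv
    simp [corona] at huv
  · intro v hv
    rcases hfv : f v with a | a
    · exact absurd ⟨a, hfv.symm⟩ hv
    · refine ⟨f.symm (Sum.inl a.1.1), by simp [Ext], ?_⟩
      rw [← f.map_adj_iff, hfv, RelIso.apply_symm_apply]
      simp [corona]
  · rintro v hv u ⟨a, ha⟩ w ⟨b, hb⟩ hu hw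
    rcases hfv : f v with c | c
    · exact absurd ⟨c, hfv.symm⟩ hv
    · rw [← f.map_adj_iff, hfv, ← ha] at hu
      rw [← f.map_adj_iff, hfv, ← hb] at hw
      simp only [corona, fromRel_adj, false_or] at hu hw
      exact f.injective (by rw [← ha, ← hb, hu.2, hw.2])
  · intro v hv
    rcases hfv : f v with a | ⟨⟨x, A⟩, hA⟩
    · exact absurd ⟨a, hfv.symm⟩ hv
    · obtain ⟨y, hy⟩ := P.nonempty x A hA
      have hxy : S.Adj x y := P.subset_nbhd x A hA hy
      obtain ⟨B, hB, hxB⟩ := P.covers y x hxy.symm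
      refine ⟨f.symm (Sum.inr ⟨(y, B), hB⟩), by simp [Ext], ?_⟩
      rw [← f.map_adj_iff, hfv, RelIso.apply_symm_apply]
      simp [corona, hxy, hxy.ne, hy, hxB]

theorem dominationNumber_le {D : Set V} (hD : IsDominating G D) :
    dominationNumber G ≤ D.ncard :=
  Nat.sInf_le ⟨D, hD, rfl⟩

/-- A set with pairwise disjoint closed neighborhoods bounds the domination number below. -/
theorem ncard_le_dominationNumber [Finite V] {S : Set V}
    (hS : ∀ s ∈ S, ∀ t ∈ S, ∀ w, (w = s ∨ G.Adj s w) → (w = t ∨ G.Adj t w) → s = t) :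
    S.ncard ≤ dominationNumber G := by
  refine le_csInf ⟨_, Set.univ, fun v hv => absurd trivial hv, rfl⟩ ?_
  rintro _ ⟨D, hD, rfl⟩
  have key : ∀ s, ∃ w ∈ D, w = s ∨ G.Adj s w := fun s => by
    by_cases hs : s ∈ D
    · exact ⟨s, hs, Or.inl rfl⟩
    · obtain ⟨u, hu, h⟩ := hD s hs
      exact ⟨u, hu, Or.inr h⟩
  choose g hgD hg using key
  refine Set.ncard_le_ncard_of_injOn g (fun s _ => hgD s) ?_
  intro s hs t ht hst
  exact hS s hs t ht (g s) (hg s) (hst ▸ hg t)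

theorem IsExternal.eq_of_closed_nbhd (hE : IsExternal G E) {s t w : V} (hs : s ∈ E) (ht : t ∈ E)
    (h₁ : w = s ∨ G.Adj s w) (h₂ : w = t ∨ G.Adj t w) : s = t := by
  rcases h₁ with rfl | h₁ <;> rcases h₂ with rfl | h₂
  · rfl
  · exact absurd h₂ (hE.indep _ ht _ hs)
  · exact absurd h₁ (hE.indep _ hs _ ht)
  · exact hE.ext_unique w (fun hw => hE.indep _ hs _ hw h₁) s hs t ht h₁.symm h₂.symm

theorem IsExternal.dominationNumber_eq [Finite V] (hE : IsExternal G E) :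
    dominationNumber G = E.ncard :=
  (dominationNumber_le hE.exists_ext).antisymm <|
    ncard_le_dominationNumber fun _ hs _ ht _ => hE.eq_of_closed_nbhd hs ht

@[simp] theorem subdivide_adj_inl_inl {u v : V} :
    (subdivide G F).Adj (Sum.inl u) (Sum.inl v) ↔ G.Adj u v ∧ s(u, v) ∉ F := by
  simp only [subdivide, fromRel_adj, ne_eq, Sum.inl.injEq, Sym2.eq_swap (a := v), G.adj_comm v u,
    or_self, and_iff_right_iff_imp]
  exact fun h => h.1.ne

@[simp] theorem subdivide_adj_inl_inr {u : V} {e : F} :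
    (subdivide G F).Adj (Sum.inl u) (Sum.inr e) ↔ u ∈ e.1 := by
  simp [subdivide]

@[simp] theorem subdivide_adj_inr_inl {u : V} {e : F} :
    (subdivide G F).Adj (Sum.inr e) (Sum.inl u) ↔ u ∈ e.1 := by
  rw [adj_comm, subdivide_adj_inl_inr]

@[simp] theorem not_subdivide_adj_inr_inr {e e' : F} :
    ¬ (subdivide G F).Adj (Sum.inr e) (Sum.inr e') := by
  simp [subdivide]

/-- Subdividing the path `ext - b - c - ext` around an internal edge `bc` raises the domination
number. -/
theorem IsExternal.dominationNumber_lt_subdivide [Finite V] (hE : IsExternal G E) {a b c d : V}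
    (ha : a ∈ E) (hd : d ∈ E) (hb : b ∉ E) (hc : c ∉ E) (hab : G.Adj b a) (hcd : G.Adj c d) :
    dominationNumber G < dominationNumber (subdivide G {s(a, b), s(b, c), s(c, d)}) := by
  set F : Set (Sym2 V) := {s(a, b), s(b, c), s(c, d)} with hF
  have hbc : s(b, c) ∈ F := by simp [hF]
  let y : V ⊕ F := Sum.inr ⟨s(b, c), hbc⟩
  have hy : y ∉ Sum.inl '' E := by simp [y]
  rw [hE.dominationNumber_eq, Nat.lt_iff_add_one_le,
    ← Set.ncard_image_of_injective E (Sum.inl_injective (β := F)), ← Set.ncard_insert_of_notMem hy]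
  have key : ∀ s ∈ E, ∀ w, (w = Sum.inl s ∨ (subdivide G F).Adj (Sum.inl s) w) →
      ¬ (w = y ∨ (subdivide G F).Adj y w) := by
    intro s hs w hw hwy
    have hsb : s ≠ b := fun h => hb (h ▸ hs)
    have hsc : s ≠ c := fun h => hc (h ▸ hs)
    rcases w with w | e
    · have hwbc : w = b ∨ w = c := by simpa [y] using hwy
      have hws : G.Adj s w ∧ s(s, w) ∉ F := by
        rcases hw with hw | hw
        · obtain rfl := Sum.inl_injective hw
          exact absurd hwbc (by simp [hsb, hsc])
        · simpa using hw
      rcases hwbc with rfl | rfl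
      · obtain rfl := hE.ext_unique w hb a ha s hs hab hws.1.symm
        exact hws.2 (by simp [hF])
      · obtain rfl := hE.ext_unique w hc d hd s hs hcd hws.1.symm
        exact hws.2 (by simp [hF, Sym2.eq_swap])
    · have h₁ : e.1 = s(b, c) := by simpa [y, Subtype.ext_iff] using hwy
      have h₂ : s ∈ e.1 := by simpa using hw
      rw [h₁] at h₂
      simp [hsb, hsc] at h₂
  refine ncard_le_dominationNumber ?_
  rintro _ (rfl | ⟨s, hs, rfl⟩) _ (rfl | ⟨t, ht, rfl⟩) w h₁ h₂
  · rfl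
  · exact absurd h₁ (key t ht w h₂)
  · exact absurd h₂ (key s hs w h₁)
  · congr 1
    rcases w with w | e
    · refine hE.eq_of_closed_nbhd hs ht (w := w) ?_ ?_
      · simp only [Sum.inl.injEq, subdivide_adj_inl_inl] at h₁
        exact h₁.imp_right And.left
      · simp only [Sum.inl.injEq, subdivide_adj_inl_inl] at h₂
        exact h₂.imp_right And.left
    · have h₁ : s ∈ e.1 := by simpa using h₁
      have h₂ : t ∈ e.1 := by simpa using h₂
      have hsb : s ≠ b := fun h => hb (h ▸ hs)
      have hsc : s ≠ c := fun h => hc (h ▸ hs)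
      have htb : t ≠ b := fun h => hb (h ▸ ht)
      have htc : t ≠ c := fun h => hc (h ▸ ht)
      rcases e with ⟨e, rfl | rfl | rfl⟩ <;> simp_all

/-- A family `p` of parents toward a vertex set `M` whose edge boundary is `F`. -/
structure IsParentToward (G : SimpleGraph V) (F : Set (Sym2 V)) (M : Set V) (p : V → V) :
    Prop where
  mem_iff : ∀ u v, G.Adj u v → (s(u, v) ∈ F ↔ ¬ (u ∈ M ↔ v ∈ M))
  adj : ∀ x ∉ M, G.Adj x (p x)
  notMem : ∀ x ∉ M, ∀ y, G.Adj x y → y ≠ p x → y ∉ M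
  eq : ∀ x ∉ M, ∀ y, G.Adj x y → y ≠ p x → p y = x

/-- If some component of `G - F` touches all edges of the tree `G` in `F`, then parents toward
this component exist. -/
theorem exists_isParentToward (hG : G.IsTree) (r : V)
    (hr : ∀ e ∈ F, ∃ v ∈ e, (G.deleteEdges F).Reachable v r) :
    ∃ M p, IsParentToward G F M p := by
  classical
  choose q hq huniq using fun v => hG.existsUnique_path v r
  have hcons : ∀ x y, (h : G.Adj x y) → y ∉ (q x).support → q y = Walk.cons h.symm (q x) :=
    fun x y h hy => (huniq y _ ((hq x).cons hy)).symm
  have hdich : ∀ x y, G.Adj x y → y ∉ (q x).support ∨ x ∉ (q y).support := fun x y h => by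
    by_contra! hc
    exact hG.isAcyclic.ne_mem_support_of_support_of_adj_of_isPath (hq x).reverse (hq y).reverse h
      (by simpa using hc.1) (by simpa using hc.2)
  have hmem : ∀ e ∈ F, ∃ v ∈ e, ∀ e' ∈ (q v).edges, e' ∉ F := by
    intro e he
    obtain ⟨v, hv, ⟨w⟩⟩ := hr e he
    refine ⟨v, hv, ?_⟩
    have hw := huniq v _ (w.bypass_isPath.mapLe (G.deleteEdges_le F))
    intro e' he'
    rw [← hw, Walk.edges_mapLe_eq_edges] at he'
    have := w.bypass.edges_subset_edgeSet he'
    rw [edgeSet_deleteEdges] at this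
    exact this.2
  have haux : ∀ x y, G.Adj x y → y ∉ (q x).support →
      (s(x, y) ∈ F ↔ ¬ ((∀ e ∈ (q x).edges, e ∉ F) ↔ ∀ e ∈ (q y).edges, e ∉ F)) := by
    intro x y h hy
    have hy' : (∀ e ∈ (q y).edges, e ∉ F) ↔ s(x, y) ∉ F ∧ ∀ e ∈ (q x).edges, e ∉ F := by
      rw [hcons x y h hy, Walk.edges_cons, List.forall_mem_cons, Sym2.eq_swap]
    have hx' : s(x, y) ∈ F → ∀ e ∈ (q x).edges, e ∉ F := by
      intro he
      obtain ⟨v, hv, hvF⟩ := hmem _ he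
      rcases Sym2.mem_iff.1 hv with rfl | rfl
      · exact hvF
      · exact absurd he (hy'.1 hvF).1
    tauto
  refine ⟨{v | ∀ e ∈ (q v).edges, e ∉ F}, fun v => (q v).snd, ?_, ?_, ?_, ?_⟩
  · intro u v h
    rcases hdich u v h with h' | h'
    · exact haux u v h h'
    · rw [Sym2.eq_swap, haux v u h.symm h']
      exact not_congr Iff.comm
  · intro x hx
    refine Walk.adj_snd fun hn => hx ?_
    simp [Walk.edges_eq_nil.2 hn]
  · intro x hx y h hy hyM
    refine hx fun e he => hyM e ?_
    rw [hcons x y h fun hs => hy (hG.isAcyclic.eq_snd_of_adj_start (hq x) h hs)]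
    simp [he]
  · intro x hx y h hy
    rw [hcons x y h fun hs => hy (hG.isAcyclic.eq_snd_of_adj_start (hq x) h hs)]
    simp

theorem IsExternal.dominationNumber_subdivide_le [Finite V] (hE : IsExternal G E)
    (hF : F ⊆ G.edgeSet) {M : Set V} {p : V → V} (hp : IsParentToward G F M p) :
    dominationNumber (subdivide G F) ≤ E.ncard := by
  classical
  let g : V → V ⊕ F := fun v =>
    if v ∈ M then Sum.inl v else if h : s(v, p v) ∈ F then Sum.inr ⟨_, h⟩ else Sum.inl (p v)
  have g_mem : ∀ v ∈ M, g v = Sum.inl v := fun v hv => if_pos hv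
  have g_sub : ∀ v ∉ M, ∀ h : s(v, p v) ∈ F, g v = Sum.inr ⟨_, h⟩ := fun v hv h => by
    simp [g, hv, h]
  have g_par : ∀ v ∉ M, p v ∉ M → g v = Sum.inl (p v) := fun v hv h => by
    have : s(v, p v) ∉ F := by rw [hp.mem_iff _ _ (hp.adj v hv)]; tauto
    simp [g, hv, this]
  refine (dominationNumber_le (D := g '' E) ?_).trans (Set.ncard_image_le E.toFinite)
  suffices H : ∀ x, ∃ a ∈ E, g a = x ∨ (subdivide G F).Adj x (g a) by
    intro x hx
    obtain ⟨a, ha, h⟩ := H x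
    exact ⟨g a, ⟨a, ha, rfl⟩, h.resolve_left fun h => hx ⟨a, ha, h⟩⟩
  have par : ∀ v ∉ E, v ∉ M → ∀ a ∈ E, G.Adj v a → a ≠ p v → g a = Sum.inl v := by
    intro v hvE hvM a ha h hne
    have h1 := hp.eq v hvM a h hne
    rw [g_par a (hp.notMem v hvM a h hne) (by rwa [h1]), h1]
  have bdry : ∀ u v, G.Adj u v → u ∈ M → v ∉ M → p v = u := by
    intro u v h hu hv
    by_contra hne
    exact hp.notMem v hv u h.symm (Ne.symm hne) hu
  rintro (v | ⟨e, he⟩)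
  · by_cases hvE : v ∈ E
    · refine ⟨v, hvE, ?_⟩
      by_cases hvM : v ∈ M
      · exact Or.inl (g_mem v hvM)
      · right
        by_cases h : s(v, p v) ∈ F
        · rw [g_sub v hvM h]; simp
        · simp [g, hvM, h, hp.adj v hvM]
    · obtain ⟨a, ha, hva⟩ := hE.exists_ext v hvE
      by_cases hvM : v ∈ M
      · refine ⟨a, ha, Or.inr ?_⟩
        by_cases haM : a ∈ M
        · rw [g_mem a haM, subdivide_adj_inl_inl, hp.mem_iff _ _ hva]
          tauto
        · have h1 := bdry v a hva hvM haM
          have h2 : s(a, p a) ∈ F := by rw [h1, hp.mem_iff _ _ hva.symm]; tauto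
          rw [g_sub a haM h2]
          simp [h1]
      · by_cases hpa : a = p v
        · obtain ⟨w, hw, hvw⟩ := hE.exists_int v hvE
          have hwp : w ≠ p v := fun h => hw (h ▸ hpa ▸ ha)
          have hwM := hp.notMem v hvM w hvw hwp
          obtain ⟨b, hb, hwb⟩ := hE.exists_ext w hw
          refine ⟨b, hb, Or.inr ?_⟩
          rw [par w hw hwM b hb hwb, subdivide_adj_inl_inl, hp.mem_iff _ _ hvw]
          · tauto
          · rw [hp.eq v hvM w hvw hwp]
            exact fun h => hvE (h ▸ hb)
        · exact ⟨a, ha, Or.inl (par v hvE hvM a ha hva hpa)⟩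
  · have key : ∀ u v, G.Adj u v → ∀ he : s(u, v) ∈ F, u ∈ M → v ∉ M →
        ∃ a ∈ E, g a = Sum.inr ⟨s(u, v), he⟩ ∨
          (subdivide G F).Adj (Sum.inr ⟨s(u, v), he⟩) (g a) := by
      intro u v h he hu hv
      have hpv := bdry u v h hu hv
      by_cases hvE : v ∈ E
      · refine ⟨v, hvE, Or.inl ?_⟩
        have h2 : s(v, p v) ∈ F := by rwa [hpv, Sym2.eq_swap]
        rw [g_sub v hv h2]
        simp [hpv, Sym2.eq_swap]
      · by_cases huE : u ∈ E
        · refine ⟨u, huE, Or.inr ?_⟩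
          rw [g_mem u hu]; simp
        · obtain ⟨a, ha, hva⟩ := hE.exists_ext v hvE
          refine ⟨a, ha, Or.inr ?_⟩
          rw [par v hvE hv a ha hva (fun h => huE (hpv ▸ h ▸ ha))]
          simp
    induction e with | _ u v
    have h : G.Adj u v := hF he
    have hm := (hp.mem_iff u v h).1 he
    by_cases hu : u ∈ M
    · exact key u v h he hu (by tauto)
    · have h2 : s(v, u) ∈ F := by rwa [Sym2.eq_swap]
      have := key v u h.symm h2 (by tauto) hu
      simpa only [Sym2.eq_swap (a := v)] using this

/-- For any two edges of a connected graph, some component of the graph without them touches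
both. -/
theorem exists_reachable_deleteEdges_of_subset_pair (hG : G.Connected) {e₁ e₂ : Sym2 V}
    (h : F ⊆ {e₁, e₂}) : ∃ r, ∀ e ∈ F, ∃ v ∈ e, (G.deleteEdges F).Reachable v r := by
  induction e₁ with | _ u v
  induction e₂ with | _ w z
  obtain ⟨P⟩ := hG.preconnected u w
  have key : ∀ a b, (q : G.Walk a b) → b ∈ s(w, z) →
      (∃ x ∈ s(u, v), (G.deleteEdges F).Reachable x a) →
      ∃ r ∈ s(w, z), ∃ x ∈ s(u, v), (G.deleteEdges F).Reachable x r := by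
    intro a b q
    induction q with
    | nil => exact fun hb hx => ⟨_, hb, hx⟩
    | @cons a c b hac q ih =>
      rintro hb ⟨x, hx, hxa⟩
      by_cases hF : s(a, c) ∈ F
      · rcases h hF with h' | h'
        · exact ih hb ⟨c, h' ▸ Sym2.mem_mk_right a c, .rfl⟩
        · exact ⟨a, h' ▸ Sym2.mem_mk_left a c, x, hx, hxa⟩
      · exact ih hb ⟨x, hx, hxa.trans (Adj.reachable (deleteEdges_adj.2 ⟨hac, hF⟩))⟩
  obtain ⟨r, hr, x, hx, hxr⟩ := key u w P (by simp) ⟨u, by simp, .rfl⟩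
  refine ⟨r, fun e he => ?_⟩
  rcases h he with rfl | rfl
  · exact ⟨x, hx, hxr⟩
  · exact ⟨r, hr, .rfl⟩

theorem exists_subset_pair_of_ncard_le_two {α : Type*} [Nonempty α] [Finite α] {s : Set α}
    (h : s.ncard ≤ 2) : ∃ a b, s ⊆ {a, b} := by
  interval_cases hs : s.ncard
  · rw [Set.ncard_eq_zero] at hs
    obtain ⟨a⟩ := ‹Nonempty α›
    exact ⟨a, a, by simp [hs]⟩
  · obtain ⟨a, rfl⟩ := Set.ncard_eq_one.1 hs
    exact ⟨a, a, by simp⟩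
  · obtain ⟨a, b, -, rfl⟩ := Set.ncard_eq_two.1 hs
    exact ⟨a, b, subset_rfl⟩

/-- If a finite tree `T` with at least three vertices is a general corona
of a tree, then its domination subdivision number equals 3. -/
theorem sd_eq_three_of_isGeneralCorona {V : Type u} [Fintype V]
    (T : SimpleGraph V) (hT : T.IsTree) (h3 : 3 ≤ Fintype.card V)
    (h : IsGeneralCoronaOfTree T) : sd T = 3 := by
  obtain ⟨E, hE⟩ := h.exists_isExternal
  have : Nontrivial V := Fintype.one_lt_card_iff_nontrivial.1 (by omega)
  obtain ⟨b, hb⟩ : ∃ b, b ∉ E := by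
    by_contra! hall
    obtain ⟨x⟩ := hT.connected.nonempty
    obtain ⟨y, hxy⟩ := hT.connected.preconnected.exists_adj_of_nontrivial x
    exact hE.indep x (hall x) y (hall y) hxy
  obtain ⟨c, hc, hbc⟩ := hE.exists_int b hb
  obtain ⟨a, ha, hab⟩ := hE.exists_ext b hb
  obtain ⟨d, hd, hcd⟩ := hE.exists_ext c hc
  have hmem : 3 ∈ {k : ℕ | ∃ F : Set (Sym2 V), F ⊆ T.edgeSet ∧ F.ncard = k ∧
      dominationNumber T < dominationNumber (subdivide T F)} := by
    refine ⟨{s(a, b), s(b, c), s(c, d)}, ?_, ?_,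
      hE.dominationNumber_lt_subdivide ha hd hb hc hab hcd⟩
    · rintro e (rfl | rfl | rfl)
      exacts [hab.symm, hbc, hcd]
    · have hac : a ≠ c := fun h => hc (h ▸ ha)
      have hdb : d ≠ b := fun h => hb (h ▸ hd)
      have hbc := hbc.ne
      have hab := hab.ne
      have hcd := hcd.ne
      refine Set.ncard_eq_three.2 ⟨_, _, _, ?_, ?_, ?_, rfl⟩ <;> simp <;> grind
  refine le_antisymm (Nat.sInf_le hmem) (le_csInf ⟨3, hmem⟩ ?_)
  rintro _ ⟨F, hF, rfl, hlt⟩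
  by_contra! hcard
  obtain ⟨e₁, e₂, hsub⟩ := exists_subset_pair_of_ncard_le_two (Nat.lt_succ_iff.1 hcard)
  obtain ⟨r, hr⟩ := exists_reachable_deleteEdges_of_subset_pair hT.connected hsub
  obtain ⟨M, p, hp⟩ := exists_isParentToward hT r hr
  rw [hE.dominationNumber_eq] at hlt
  exact hlt.not_ge (hE.dominationNumber_subdivide_le hF hp)

end GenCorona
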